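/- arXiv:1704.05389 — 3 statements merged into one kernel-verified Lean document; each statement's English description precedes it below -/
import Mathlib

section
/- Let Λ₂, Λ₃ ∈ ℝ, let D = diag(0, Λ₂, Λ₃) be the 3×3 real diagonal matrix with these entries, let B be any 3×3 real matrix, and let E : ℝ → Matrix (Fin 3) (Fin 3) ℝ satisfy ‖E(t)‖ = O(t³) as t → 0. Then det(t·D + t²·B + E(t)) = B₀₀·Λ₂·Λ₃·t⁴ + O(t⁵) as t → 0, where B₀₀ is the (1,1)-entry of B. -/
open Asymptotics

attribute [local instance] Matrix.normedAddCommGroup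

/-- A triple product of functions of orders `k`, `l`, `m` at zero has order `k + l + m`. -/
theorem isBigO_mul_mul_pow {f g h : ℝ → ℝ} {k l m n : ℕ} (hn : k + l + m = n)
    (hf : f =O[nhds 0] fun t : ℝ => t ^ k) (hg : g =O[nhds 0] fun t : ℝ => t ^ l)
    (hh : h =O[nhds 0] fun t : ℝ => t ^ m) :
    (fun t => f t * g t * h t) =O[nhds 0] fun t : ℝ => t ^ n := by
  subst hn
  simpa only [pow_add] using (hf.mul hg).mul hh

/-- Near zero, higher powers are dominated by lower ones. -/
theorem isBigO_pow_pow_nhds_zero {k l : ℕ} (h : k ≤ l) :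
    (fun t : ℝ => t ^ l) =O[nhds 0] fun t : ℝ => t ^ k := by
  obtain rfl | h := h.eq_or_lt
  · exact isBigO_refl _ _
  · exact (isLittleO_pow_pow h).isBigO

/-- With `D = diag(0, Λ₂, Λ₃)`, `B` any `3×3` real matrix and
`‖E t‖ = O(t³)` as `t → 0`, one has
`det (t•D + t²•B + E t) = B₀₀ Λ₂ Λ₃ t⁴ + O(t⁵)` as `t → 0`
(equation (26) of the paper). -/
theorem stmt2 (Λ₂ Λ₃ : ℝ) (B : Matrix (Fin 3) (Fin 3) ℝ)
    (E : ℝ → Matrix (Fin 3) (Fin 3) ℝ)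
    (hE : (fun t : ℝ => ‖E t‖) =O[nhds 0] fun t : ℝ => t ^ 3) :
    (fun t : ℝ =>
        (t • Matrix.diagonal ![0, Λ₂, Λ₃] + t ^ 2 • B + E t).det
          - B 0 0 * Λ₂ * Λ₃ * t ^ 4)
      =O[nhds 0] fun t : ℝ => t ^ 5 := by
  have hE3 (i j : Fin 3) : (fun t => E t i j) =O[nhds 0] fun t : ℝ => t ^ 3 :=
    (IsBigO.of_bound 1 (.of_forall fun t => by
      simpa using Matrix.norm_entry_le_entrywise_sup_norm (E t) (i := i) (j := j))).trans hE
  have hB (i j : Fin 3) : (fun t => t ^ 2 * B i j) =O[nhds 0] fun t : ℝ => t ^ 2 := by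
    simpa only [mul_comm (B i j)] using
      (isBigO_refl (fun t : ℝ => t ^ 2) _).const_mul_left (B i j)
  have hd (d : ℝ) : (fun t => t * d) =O[nhds 0] fun t : ℝ => t ^ 1 := by
    simpa only [pow_one, mul_comm d] using (isBigO_refl (fun t : ℝ => t) _).const_mul_left d
  have hR (i j : Fin 3) :
      (fun t => t ^ 2 * B i j + E t i j) =O[nhds 0] fun t : ℝ => t ^ 2 :=
    (hB i j).add ((hE3 i j).trans (isBigO_pow_pow_nhds_zero (by norm_num)))
  have hM (d : ℝ) (i j : Fin 3) :
      (fun t => t * d + (t ^ 2 * B i j + E t i j)) =O[nhds 0] fun t : ℝ => t ^ 1 :=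
    (hd d).add ((hR i j).trans (isBigO_pow_pow_nhds_zero (by norm_num)))
  have hR1 (i j : Fin 3) := (hR i j).trans (isBigO_pow_pow_nhds_zero one_le_two)
  have key := (((((((isBigO_mul_mul_pow (n := 5) rfl (hE3 0 0) (hM Λ₂ 1 1) (hM Λ₃ 2 2)).add
    (isBigO_mul_mul_pow rfl (hB 0 0) (hR 1 1) (hM Λ₃ 2 2))).add
    (isBigO_mul_mul_pow rfl (hB 0 0) (hd Λ₂) (hR 2 2))).sub
    (isBigO_mul_mul_pow rfl (hR 0 0) (hR 1 2) (hR1 2 1))).sub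
    (isBigO_mul_mul_pow rfl (hR 0 1) (hR 1 0) (hM Λ₃ 2 2))).add
    (isBigO_mul_mul_pow rfl (hR 0 1) (hR 1 2) (hR1 2 0))).add
    (isBigO_mul_mul_pow rfl (hR 0 2) (hR 1 0) (hR1 2 1))).sub
    (isBigO_mul_mul_pow rfl (hR 0 2) (hM Λ₂ 1 1) (hR 2 0))
  refine key.congr_left fun t => ?_
  simp [Matrix.det_fin_three]
  ring
end

section
/- Let σ : ℝ⁴ → ℝ⁴ be the linear map σ(x₁,x₂,x₃,x₄) = (−x₃, x₄, x₁, −x₂), and let Λ²σ be the induced linear map on the second exterior power Λ²(ℝ⁴). With e₁, e₂, e₃, e₄ the standard basis of ℝ⁴ and ω₁ = e₁∧e₂ + e₃∧e₄, ω₂ = e₁∧e₃ + e₄∧e₂, ω₃ = e₁∧e₄ + e₂∧e₃, one has Λ²σ(ω₁) = −ω₁, Λ²σ(ω₂) = ω₂, and Λ²σ(ω₃) = −ω₃. In particular Λ²σ acts on the span of ω₁, ω₂, ω₃ with eigenvalue −1 on span{ω₁, ω₃} and +1 on span{ω₂}. -/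
open ExteriorAlgebra

/-- Let `σ(x₁,x₂,x₃,x₄) = (−x₃, x₄, x₁, −x₂)` on `ℝ⁴` and let
`Λ²σ` be the induced map on the second exterior power (the restriction of the
functorial map `ExteriorAlgebra.map σ`, which preserves `⋀[ℝ]² (Fin 4 → ℝ)`).
With `ω₁ = e₁∧e₂ + e₃∧e₄`, `ω₂ = e₁∧e₃ + e₄∧e₂`, `ω₃ = e₁∧e₄ + e₂∧e₃` one has
`Λ²σ ω₁ = −ω₁`, `Λ²σ ω₂ = ω₂`, `Λ²σ ω₃ = −ω₃`; in particular `Λ²σ` acts with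
eigenvalue `−1` on `span{ω₁, ω₃}` and `+1` on `span{ω₂}`. -/
theorem stmt4 (σ : (Fin 4 → ℝ) →ₗ[ℝ] (Fin 4 → ℝ))
    (hσ : ∀ x : Fin 4 → ℝ, σ x = ![-(x 2), x 3, x 0, -(x 1)]) :
    ∀ e : Fin 4 → (Fin 4 → ℝ), (∀ i, e i = Pi.single i 1) →
    ∀ w : (Fin 4 → ℝ) → (Fin 4 → ℝ) → ExteriorAlgebra ℝ (Fin 4 → ℝ),
      (∀ a b, w a b = ιMulti ℝ 2 ![a, b]) →
    ∀ ω₁ ω₂ ω₃ : ExteriorAlgebra ℝ (Fin 4 → ℝ),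
      ω₁ = w (e 0) (e 1) + w (e 2) (e 3) →
      ω₂ = w (e 0) (e 2) + w (e 3) (e 1) →
      ω₃ = w (e 0) (e 3) + w (e 1) (e 2) →
    (ω₁ ∈ ⋀[ℝ]^2 (Fin 4 → ℝ) ∧ ω₂ ∈ ⋀[ℝ]^2 (Fin 4 → ℝ) ∧ ω₃ ∈ ⋀[ℝ]^2 (Fin 4 → ℝ)) ∧
    (ExteriorAlgebra.map σ ω₁ = -ω₁ ∧
     ExteriorAlgebra.map σ ω₂ = ω₂ ∧
     ExteriorAlgebra.map σ ω₃ = -ω₃) ∧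
    (∀ v ∈ Submodule.span ℝ ({ω₁, ω₃} : Set (ExteriorAlgebra ℝ (Fin 4 → ℝ))),
      ExteriorAlgebra.map σ v = -v) ∧
    (∀ v ∈ Submodule.span ℝ ({ω₂} : Set (ExteriorAlgebra ℝ (Fin 4 → ℝ))),
      ExteriorAlgebra.map σ v = v) := by
  intro e he w hw ω₁ ω₂ ω₃ h₁ h₂ h₃
  have hmem (a b) : w a b ∈ ⋀[ℝ]^2 (Fin 4 → ℝ) := by
    rw [hw]
    exact ιMulti_range ℝ 2 ⟨_, rfl⟩
  have hmul (a b) : w a b = ι ℝ a * ι ℝ b := by simp [hw, ιMulti_apply]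
  have hmap (a b) : ExteriorAlgebra.map σ (w a b) = ι ℝ (σ a) * ι ℝ (σ b) := by
    rw [hmul, map_mul, map_apply_ι, map_apply_ι]
  have hswap (a b : Fin 4 → ℝ) : ι ℝ a * ι ℝ b = -(ι ℝ b * ι ℝ a) :=
    eq_neg_of_add_eq_zero_left (ι_add_mul_swap a b)
  have hσ₀ : σ (e 0) = e 2 := by
    rw [hσ]; ext i; fin_cases i <;> simp [he]
  have hσ₁ : σ (e 1) = -e 3 := by
    rw [hσ]; ext i; fin_cases i <;> simp [he]
  have hσ₂ : σ (e 2) = -e 0 := by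
    rw [hσ]; ext i; fin_cases i <;> simp [he]
  have hσ₃ : σ (e 3) = e 1 := by
    rw [hσ]; ext i; fin_cases i <;> simp [he]
  have hω₁ : ExteriorAlgebra.map σ ω₁ = -ω₁ := by
    rw [h₁, map_add, hmap, hmap, hmul, hmul, hσ₀, hσ₁, hσ₂, hσ₃, map_neg, map_neg]
    noncomm_ring
  have hω₂ : ExteriorAlgebra.map σ ω₂ = ω₂ := by
    rw [h₂, map_add, hmap, hmap, hmul, hmul, hσ₀, hσ₁, hσ₂, hσ₃, map_neg, map_neg,
      hswap (e 0) (e 2), hswap (e 3) (e 1)]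
    noncomm_ring
  have hω₃ : ExteriorAlgebra.map σ ω₃ = -ω₃ := by
    rw [h₃, map_add, hmap, hmap, hmul, hmul, hσ₀, hσ₁, hσ₂, hσ₃, map_neg, map_neg,
      hswap (e 0) (e 3), hswap (e 1) (e 2)]
    noncomm_ring
  refine ⟨⟨?_, ?_, ?_⟩, ⟨hω₁, hω₂, hω₃⟩, fun v hv => ?_, fun v hv => ?_⟩
  · exact h₁ ▸ add_mem (hmem _ _) (hmem _ _)
  · exact h₂ ▸ add_mem (hmem _ _) (hmem _ _)
  · exact h₃ ▸ add_mem (hmem _ _) (hmem _ _)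
  · obtain ⟨a, b, rfl⟩ := Submodule.mem_span_pair.1 hv
    rw [map_add, map_smul, map_smul, hω₁, hω₃, smul_neg, smul_neg, neg_add]
  · obtain ⟨a, rfl⟩ := Submodule.mem_span_singleton.1 hv
    rw [map_smul, hω₂]
end

section
/- Let E and F be real normed vector spaces, let S and O be subspaces of E with O finite-dimensional, let P : E → F be a continuous linear map, let L : O → O be an invertible continuous linear map with continuous inverse L⁻¹, and let C > 0, ε ≥ 0 be constants with ε·C·‖L⁻¹‖ ≤ 1/2. Assume that for all s ∈ S and x ∈ O: ‖s‖ + ‖L x‖ ≤ C·(‖P(s + x)‖ + ε·‖x‖). Then for all s ∈ S and x ∈ O: ‖s‖ + ‖x‖ ≤ 2·C·max(1, ‖L⁻¹‖)·‖P(s + x)‖; in particular P is injective on the subspace S + O (if s + x = s' + x' only when s = s', x = x'). -/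
/-- Abstract coercivity lemma behind Lemma 2 of the paper: given
subspaces `S`, `O ⊆ E` with `O` finite dimensional, a continuous linear map
`P : E → F`, an invertible continuous linear map `L : O → O`, constants
`C > 0`, `ε ≥ 0` with `ε·C·‖L⁻¹‖ ≤ 1/2`, and the estimate
`‖s‖ + ‖L x‖ ≤ C (‖P (s+x)‖ + ε ‖x‖)` for all `s ∈ S`, `x ∈ O`, one gets
`‖s‖ + ‖x‖ ≤ 2 C max(1, ‖L⁻¹‖) ‖P (s+x)‖`; in particular `P` is injective on
`S + O`. -/
theorem stmt7 {E F : Type*} [NormedAddCommGroup E] [NormedSpace ℝ E]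
    [NormedAddCommGroup F] [NormedSpace ℝ F]
    (S O : Submodule ℝ E) [FiniteDimensional ℝ O]
    (P : E →L[ℝ] F) (L : O ≃L[ℝ] O) (C ε : ℝ) (hC : 0 < C) (hε : 0 ≤ ε)
    (hsmall : ε * C * ‖(L.symm : O →L[ℝ] O)‖ ≤ 1 / 2)
    (hcoer : ∀ (s : S) (x : O),
      ‖(s : E)‖ + ‖(L x : E)‖ ≤ C * (‖P ((s : E) + (x : E))‖ + ε * ‖(x : E)‖)) :
    (∀ (s : S) (x : O),
      ‖(s : E)‖ + ‖(x : E)‖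
        ≤ 2 * C * max 1 ‖(L.symm : O →L[ℝ] O)‖ * ‖P ((s : E) + (x : E))‖) ∧
    (∀ (s s' : S) (x x' : O),
      P ((s : E) + (x : E)) = P ((s' : E) + (x' : E)) → s = s' ∧ x = x') := by
  have key : ∀ (s : S) (x : O),
      ‖(s : E)‖ + ‖(x : E)‖
        ≤ 2 * C * max 1 ‖(L.symm : O →L[ℝ] O)‖ * ‖P ((s : E) + (x : E))‖ := by
    intro s x
    have hx : ‖(x : E)‖ ≤ ‖(L.symm : O →L[ℝ] O)‖ * ‖(L x : E)‖ := by
      simpa using (L.symm : O →L[ℝ] O).le_opNorm (L x)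
    have hest := hcoer s x
    set l := ‖(L.symm : O →L[ℝ] O)‖
    set M := max 1 l
    have hs : 0 ≤ ‖(s : E)‖ := norm_nonneg _
    have hy : 0 ≤ ‖(L x : E)‖ := norm_nonneg _
    have habsorb : C * ε * ‖(x : E)‖ ≤ 1 / 2 * ‖(L x : E)‖ :=
      calc C * ε * ‖(x : E)‖ ≤ C * ε * (l * ‖(L x : E)‖) := by gcongr
        _ = ε * C * l * ‖(L x : E)‖ := by ring
        _ ≤ 1 / 2 * ‖(L x : E)‖ := by gcongr
    have hM : 1 ≤ M := le_max_left _ _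
    calc ‖(s : E)‖ + ‖(x : E)‖ ≤ 1 * ‖(s : E)‖ + l * ‖(L x : E)‖ := by linarith
      _ ≤ M * ‖(s : E)‖ + M * ‖(L x : E)‖ := by
        gcongr
        exact le_max_right _ _
      _ = M * (‖(s : E)‖ + ‖(L x : E)‖) := by ring
      _ ≤ M * (2 * C * ‖P ((s : E) + (x : E))‖) := by
        gcongr
        linarith
      _ = 2 * C * M * ‖P ((s : E) + (x : E))‖ := by ring
  refine ⟨key, fun s s' x x' h => ?_⟩
  have hzero : P (((s - s' : S) : E) + ((x - x' : O) : E)) = 0 := by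
    rw [Submodule.coe_sub, Submodule.coe_sub, sub_add_sub_comm, map_sub, h, sub_self]
  have hle := key (s - s') (x - x')
  rw [hzero, norm_zero, mul_zero, ← Submodule.coe_norm, ← Submodule.coe_norm] at hle
  have hs := norm_nonneg (s - s')
  have hx := norm_nonneg (x - x')
  exact ⟨sub_eq_zero.mp (norm_eq_zero.mp (by linarith)),
    sub_eq_zero.mp (norm_eq_zero.mp (by linarith))⟩
end
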